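/- Let α ∈ (0,2) and β ∈ ℝ. Then there exists a constant C > 0 such that for every real t ≥ 0, |E_{α,β}(−t)| ≤ C (1 + t)^{-1}. -/

import Mathlib

/-- The two-parameter Mittag-Leffler function `E_{α,β}(z) = ∑_{n=0}^∞ z^n / Γ(nα+β)`. -/
noncomputable def mittagLeffler (α β : ℝ) (z : ℂ) : ℂ :=
  ∑' n : ℕ, z ^ n / Complex.Gamma ((n : ℂ) * α + β)

open MeasureTheory Set Filter Topology

theorem integrableOn_Ioi_rpow_mul_exp_neg_mul {s b : ℝ} (hs : -1 < s) (hb : 0 < b) :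
    IntegrableOn (fun t : ℝ ↦ t ^ s * Real.exp (-(b * t))) (Ioi 0) := by
  have h := integrableOn_rpow_mul_exp_neg_mul_rpow (p := 1) (s := s) (b := b) hs one_pos hb
  simpa using h

theorem differentiableOn_integral_rpow_mul_cexp {s : ℝ} (hs : 0 < s) {b : ℝ} (hb : 0 < b) :
    DifferentiableOn ℂ
      (fun r : ℂ ↦ ∫ t : ℝ in Ioi 0, ((t ^ (s - 1) : ℝ) : ℂ) * Complex.exp (-(r * t)))
      {r | b < r.re} := by
  intro r hr
  have hopen : IsOpen {r : ℂ | b < r.re} := isOpen_lt continuous_const Complex.continuous_re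
  refine ((hasDerivAt_integral_of_dominated_loc_of_deriv_le
    (F' := fun (r : ℂ) (t : ℝ) ↦ ((t ^ (s - 1) : ℝ) : ℂ) * (Complex.exp (-(r * t)) * (-t)))
    (bound := fun t : ℝ ↦ t ^ s * Real.exp (-(b * t)))
    (hopen.mem_nhds hr) ?_ ?_ ?_ ?_ ?_ ?_).2.differentiableAt).differentiableWithinAt
  · exact Eventually.of_forall fun r ↦ by
      apply Measurable.aestronglyMeasurable; fun_prop
  · refine Integrable.mono' (integrableOn_Ioi_rpow_mul_exp_neg_mul (s := s - 1) (by linarith) hb)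
      (by apply Measurable.aestronglyMeasurable; fun_prop) ?_
    refine (ae_restrict_iff' measurableSet_Ioi).2 (Eventually.of_forall fun t ht ↦ ?_)
    have ht0 : (0 : ℝ) < t := ht
    rw [norm_mul, Complex.norm_exp, Complex.norm_real, Real.norm_of_nonneg (by positivity)]
    have : b * t ≤ r.re * t := mul_le_mul_of_nonneg_right (le_of_lt hr) ht0.le
    gcongr
    simpa using this
  · apply Measurable.aestronglyMeasurable; fun_prop
  · refine (ae_restrict_iff' measurableSet_Ioi).2 (Eventually.of_forall fun t ht z hz ↦ ?_)
    have ht0 : (0 : ℝ) < t := ht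
    have hts : t ^ s = t ^ (s - 1) * t := by
      rw [← Real.rpow_add_one ht0.ne']; simp
    rw [norm_mul, norm_mul, Complex.norm_exp, Complex.norm_real, norm_neg, Complex.norm_real,
      Real.norm_of_nonneg (by positivity), Real.norm_of_nonneg ht0.le, hts]
    have : b * t ≤ z.re * t := mul_le_mul_of_nonneg_right (le_of_lt hz) ht0.le
    rw [mul_assoc, mul_comm t]
    gcongr
    simpa using this
  · exact integrableOn_Ioi_rpow_mul_exp_neg_mul (by linarith) hb
  · refine Eventually.of_forall fun t z _ ↦ ?_
    have h1 : HasDerivAt (fun z : ℂ ↦ -(z * t)) (-(t : ℂ)) z := by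
      exact (hasDerivAt_mul_const (t : ℂ)).fun_neg
    exact (h1.cexp).const_mul _

theorem integral_rpow_mul_cexp_neg_mul_Ioi {s : ℝ} (hs : 0 < s) {r : ℂ} (hr : 0 < r.re) :
    ∫ t : ℝ in Ioi 0, ((t ^ (s - 1) : ℝ) : ℂ) * Complex.exp (-(r * t)) =
      r ^ (-s : ℂ) * Complex.Gamma s := by
  have hb : 0 < r.re / 2 := by positivity
  have hopen : IsOpen {z : ℂ | r.re / 2 < z.re} := isOpen_lt continuous_const Complex.continuous_re
  have hconv : IsPreconnected {z : ℂ | r.re / 2 < z.re} :=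
    (convex_halfSpace_re_gt _).isPreconnected
  have hdiff : DifferentiableOn ℂ (fun z : ℂ ↦ z ^ (-s : ℂ) * Complex.Gamma s)
      {z | r.re / 2 < z.re} := by
    intro z hz
    have hz' : z ∈ Complex.slitPlane := Or.inl (hb.trans hz)
    exact ((differentiableAt_id.cpow_const hz').mul_const _).differentiableWithinAt
  have hmem : ((r.re : ℝ) : ℂ) ∈ {z : ℂ | r.re / 2 < z.re} := by simp; linarith
  refine AnalyticOnNhd.eqOn_of_preconnected_of_frequently_eq
    ((differentiableOn_integral_rpow_mul_cexp hs hb).analyticOnNhd hopen)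
    (hdiff.analyticOnNhd hopen) hconv hmem ?_ (by simp; linarith : r ∈ {z : ℂ | r.re / 2 < z.re})
  have hreal : ∀ x : ℝ, 0 < x →
      ∫ t : ℝ in Ioi 0, ((t ^ (s - 1) : ℝ) : ℂ) * Complex.exp (-(x * t)) =
        (x : ℂ) ^ (-s : ℂ) * Complex.Gamma s := by
    intro x hx
    have h := Complex.integral_cpow_mul_exp_neg_mul_Ioi (a := s) (by simpa using hs) hx
    rw [one_div, Complex.inv_cpow _ _ (by rw [Complex.arg_ofReal_of_nonneg hx.le]; exact Real.pi_pos.ne),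
      ← Complex.cpow_neg] at h
    rw [← h]
    refine setIntegral_congr_fun measurableSet_Ioi fun t ht ↦ ?_
    have ht0 : (0 : ℝ) ≤ t := le_of_lt ht
    simp only [Complex.ofReal_cpow ht0]
    push_cast
    rfl
  have hf : ∃ᶠ x : ℝ in 𝓝[≠] r.re, 0 < x :=
    ((lt_mem_nhds hr).filter_mono nhdsWithin_le_nhds).frequently
  have ht : Tendsto (fun x : ℝ ↦ (x : ℂ)) (𝓝[≠] r.re) (𝓝[≠] (r.re : ℂ)) := by
    refine tendsto_nhdsWithin_of_tendsto_nhds_of_eventually_within _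
      (Complex.continuous_ofReal.continuousAt.tendsto.mono_left nhdsWithin_le_nhds) ?_
    filter_upwards [self_mem_nhdsWithin] with x hx
    simpa using hx
  exact ht.frequently (hf.mono hreal)

/-- The vertical line `Re w = 1`, parametrised by `y ↦ 1 + 2πiy`. -/
noncomputable def verticalLine (y : ℝ) : ℂ := 1 + 2 * Real.pi * y * Complex.I

theorem verticalLine_re (y : ℝ) : (verticalLine y).re = 1 := by simp [verticalLine]

theorem verticalLine_mem_slitPlane (y : ℝ) : verticalLine y ∈ Complex.slitPlane :=
  Or.inl (by rw [verticalLine_re]; exact one_pos)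

theorem verticalLine_ne_zero (y : ℝ) : verticalLine y ≠ 0 :=
  Complex.slitPlane_ne_zero (verticalLine_mem_slitPlane y)

theorem one_le_norm_verticalLine (y : ℝ) : 1 ≤ ‖verticalLine y‖ := by
  simpa [verticalLine_re] using Complex.re_le_norm (verticalLine y)

theorem continuous_verticalLine : Continuous verticalLine := by
  unfold verticalLine; fun_prop

theorem continuous_verticalLine_cpow (c : ℂ) : Continuous fun y ↦ verticalLine y ^ c :=
  continuous_verticalLine.cpow continuous_const verticalLine_mem_slitPlane

theorem integrable_norm_verticalLine_rpow {s : ℝ} (hs : 1 < s) :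
    Integrable fun y ↦ ‖verticalLine y‖ ^ (-s) := by
  have h := integrable_rpow_neg_one_add_norm_sq (E := ℝ) (μ := volume) (r := s) (by simpa using hs)
  have h2 := h.comp_mul_left' (R := 2 * Real.pi) (by positivity)
  refine h2.congr (Eventually.of_forall fun y ↦ ?_)
  have hn : ‖verticalLine y‖ = (1 + ‖2 * Real.pi * y‖ ^ 2) ^ (1 / 2 : ℝ) := by
    rw [← Real.sqrt_eq_rpow, Complex.norm_eq_sqrt_sq_add_sq, verticalLine_re]
    simp [verticalLine, mul_pow]
  simp only [hn]
  rw [← Real.rpow_mul (by positivity)]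
  ring_nf

theorem integrable_verticalLine_cpow {s : ℝ} (hs : 1 < s) :
    Integrable fun y ↦ verticalLine y ^ ((-s : ℝ) : ℂ) := by
  refine (integrable_norm_verticalLine_rpow hs).mono'
    (continuous_verticalLine_cpow _).aestronglyMeasurable (Eventually.of_forall fun y ↦ ?_)
  rw [Complex.norm_cpow_real]

open FourierTransform in
theorem one_div_Gamma_eq_integral_verticalLine {s : ℝ} (hs : 1 < s) :
    1 / Complex.Gamma s =
      ∫ y, Complex.exp (verticalLine y) * verticalLine y ^ ((-s : ℝ) : ℂ) := by
  have hs0 : 0 < s := one_pos.trans hs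
  set f : ℝ → ℂ := (Ioi (0 : ℝ)).indicator
    fun t ↦ ((t ^ (s - 1) * Real.exp (-t) : ℝ) : ℂ) with hf
  have hF : 𝓕 f = fun y ↦ verticalLine y ^ ((-s : ℝ) : ℂ) * Complex.Gamma s := by
    ext y
    rw [Real.fourier_real_eq_integral_exp_smul, Complex.ofReal_neg,
      ← integral_rpow_mul_cexp_neg_mul_Ioi hs0 (by rw [verticalLine_re]; exact one_pos),
      ← integral_indicator measurableSet_Ioi]
    congr 1 with t
    by_cases ht : t ∈ Ioi (0 : ℝ)
    · rw [hf, indicator_of_mem ht, indicator_of_mem ht, smul_eq_mul, verticalLine]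
      push_cast
      rw [mul_left_comm, ← Complex.exp_add]
      ring_nf
    · rw [hf, indicator_of_notMem ht, indicator_of_notMem ht, smul_zero]
  have hint : Integrable f := by
    rw [hf, integrable_indicator_iff measurableSet_Ioi]
    have h := integrableOn_Ioi_rpow_mul_exp_neg_mul (s := s - 1) (b := 1) (by linarith) one_pos
    simp only [one_mul] at h
    exact h.ofReal
  have hFint : Integrable (𝓕 f) := by
    rw [hF]; exact (integrable_verticalLine_cpow hs).mul_const _
  have hEq : f =ᶠ[𝓝 1] fun t ↦ ((t ^ (s - 1) * Real.exp (-t) : ℝ) : ℂ) := by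
    filter_upwards [Ioi_mem_nhds (one_pos : (0 : ℝ) < 1)] with t ht
    rw [hf, indicator_of_mem ht]
  have hcont : ContinuousAt f 1 := by
    refine ContinuousAt.congr ?_ hEq.symm
    refine Complex.continuous_ofReal.continuousAt.comp ?_
    exact (Real.continuousAt_rpow_const _ _ (Or.inl one_ne_zero)).mul (by fun_prop)
  have key := hint.fourierInv_fourier_eq hFint hcont
  rw [hEq.eq_of_nhds, hF, Real.fourierInv_eq'] at key
  have hG : Complex.Gamma s ≠ 0 := Complex.Gamma_ne_zero_of_re_pos (by simpa using hs0)
  rw [div_eq_iff hG, ← integral_mul_const]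
  have hexp : (1 : ℂ) = Complex.exp 1 * ((1 ^ (s - 1) * Real.exp (-1) : ℝ) : ℂ) := by
    rw [Real.one_rpow, one_mul, Complex.ofReal_exp, ← Complex.exp_add]
    simp
  rw [hexp, ← key, ← integral_const_mul]
  congr 1 with y
  have hy : Complex.exp (verticalLine y) =
      Complex.exp 1 * Complex.exp ((2 * Real.pi * inner ℝ y 1 : ℝ) * Complex.I) := by
    rw [← Complex.exp_add]
    simp [verticalLine, mul_assoc]
  rw [hy, smul_eq_mul]
  ring

theorem rpow_mul_exp_neg_le_Gamma {M x : ℝ} (hM : 0 < M) (hx : 1 ≤ x) :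
    M ^ (x - 1) * Real.exp (-M) ≤ Real.Gamma x := by
  have hint := Real.GammaIntegral_convergent (one_pos.trans_le hx)
  calc M ^ (x - 1) * Real.exp (-M) = ∫ t in Ioi M, Real.exp (-t) * M ^ (x - 1) := by
        rw [integral_mul_const, integral_exp_neg_Ioi, mul_comm]
    _ ≤ ∫ t in Ioi M, Real.exp (-t) * t ^ (x - 1) := by
        refine setIntegral_mono_on ((integrableOn_exp_neg_Ioi M).mul_const _)
          (hint.mono_set (Ioi_subset_Ioi hM.le)) measurableSet_Ioi fun t ht ↦ ?_
        have ht' : M ≤ t := le_of_lt ht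
        gcongr
    _ ≤ ∫ t in Ioi 0, Real.exp (-t) * t ^ (x - 1) := by
        refine setIntegral_mono_set hint ?_ (Ioi_subset_Ioi hM.le).eventuallyLE
        refine (ae_restrict_iff' measurableSet_Ioi).2 (Eventually.of_forall fun t ht ↦ ?_)
        have ht0 : (0 : ℝ) < t := ht
        simp only [Pi.zero_apply]
        positivity
    _ = Real.Gamma x := (Real.Gamma_eq_integral (one_pos.trans_le hx)).symm

theorem summable_norm_pow_div_Gamma {α : ℝ} (hα : 0 < α) (β : ℝ) (z : ℂ) :
    Summable fun n : ℕ ↦ ‖z ^ n / Complex.Gamma ((n : ℂ) * α + β)‖ := by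
  set M : ℝ := (2 * ‖z‖ + 1) ^ (1 / α) with hM
  have hM0 : 0 < M := by positivity
  have hMα : M ^ α = 2 * ‖z‖ + 1 := by
    rw [hM, ← Real.rpow_mul (by positivity), one_div_mul_cancel hα.ne', Real.rpow_one]
  have hgeom : Summable fun n : ℕ ↦ Real.exp M * M ^ (1 - β) * (1 / 2 : ℝ) ^ n :=
    summable_geometric_two.mul_left _
  refine Summable.of_norm_bounded_eventually_nat hgeom ?_
  have hev : ∀ᶠ n : ℕ in atTop, 1 ≤ (n : ℝ) * α + β :=
    (tendsto_atTop_add_const_right _ β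
      (tendsto_natCast_atTop_atTop.atTop_mul_const hα)).eventually_ge_atTop 1
  filter_upwards [hev] with n hn
  have hΓ := rpow_mul_exp_neg_le_Gamma hM0 hn
  have hcast : ((n : ℂ) * α + β) = (((n : ℝ) * α + β : ℝ) : ℂ) := by push_cast; rfl
  have hpos : 0 < M ^ ((n : ℝ) * α + β - 1) * Real.exp (-M) := by positivity
  have hpow : M ^ ((n : ℝ) * α + β - 1) = (2 * ‖z‖ + 1) ^ n * M ^ (β - 1) := by
    rw [← hMα, ← Real.rpow_natCast (M ^ α), ← Real.rpow_mul hM0.le, ← Real.rpow_add hM0]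
    ring_nf
  rw [norm_norm, hcast, Complex.Gamma_ofReal, norm_div, norm_pow, Complex.norm_real,
    Real.norm_of_nonneg (hpos.le.trans hΓ)]
  calc ‖z‖ ^ n / Real.Gamma (n * α + β)
      ≤ ‖z‖ ^ n / (M ^ ((n : ℝ) * α + β - 1) * Real.exp (-M)) := by gcongr
    _ = Real.exp M * M ^ (1 - β) * (‖z‖ / (2 * ‖z‖ + 1)) ^ n := by
        rw [hpow, Real.exp_neg, show 1 - β = -(β - 1) by ring, Real.rpow_neg hM0.le, div_pow]
        field_simp
    _ ≤ _ := by
        have hhalf : ‖z‖ / (2 * ‖z‖ + 1) ≤ 1 / 2 := by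
          rw [div_le_div_iff₀ (by positivity) two_pos]
          linarith
        gcongr

theorem hasSum_mittagLeffler {α : ℝ} (hα : 0 < α) (β : ℝ) (z : ℂ) :
    HasSum (fun n : ℕ ↦ z ^ n / Complex.Gamma ((n : ℂ) * α + β)) (mittagLeffler α β z) :=
  (summable_norm_pow_div_Gamma hα β z).of_norm.hasSum

theorem norm_pow_div_le_of_mem_ball {R : ℝ} {z : ℂ} (hz : z ∈ Metric.ball (0 : ℂ) R) (n : ℕ)
    (g : ℂ) : ‖z ^ n / g‖ ≤ ‖(R : ℂ) ^ n / g‖ := by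
  have hzR : ‖z‖ < R := by simpa using hz
  have hR : 0 ≤ R := (norm_nonneg z).trans hzR.le
  rw [norm_div, norm_div, norm_pow, norm_pow, Complex.norm_real, Real.norm_of_nonneg hR]
  gcongr

theorem differentiable_mittagLeffler {α : ℝ} (hα : 0 < α) (β : ℝ) :
    Differentiable ℂ (mittagLeffler α β) := by
  intro z
  have hz : z ∈ Metric.ball (0 : ℂ) (‖z‖ + 1) := by simp
  refine (Complex.differentiableOn_tsum_of_summable_norm
    (summable_norm_pow_div_Gamma hα β ((‖z‖ + 1 : ℝ) : ℂ))
    (fun n ↦ by fun_prop) Metric.isOpen_ball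
    fun n w hw ↦ norm_pow_div_le_of_mem_ball hw n _).differentiableAt
      (Metric.isOpen_ball.mem_nhds hz)

theorem mittagLeffler_eq_deriv_add {α : ℝ} (hα : 0 < α) (β : ℝ) (z : ℂ) :
    mittagLeffler α β z =
      α * z * deriv (mittagLeffler α (β + 1)) z + β * mittagLeffler α (β + 1) z := by
  have hz : z ∈ Metric.ball (0 : ℂ) (‖z‖ + 1) := by simp
  have hd := Complex.hasSum_deriv_of_summable_norm
    (summable_norm_pow_div_Gamma hα (β + 1) ((‖z‖ + 1 : ℝ) : ℂ))
    (F := fun (n : ℕ) (z : ℂ) ↦ z ^ n / Complex.Gamma ((n : ℂ) * α + (β + 1 : ℝ)))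
    (fun n ↦ by fun_prop) Metric.isOpen_ball
    (fun n w hw ↦ norm_pow_div_le_of_mem_ball hw n _) hz
  have h := (hd.mul_left (α * z : ℂ)).add ((hasSum_mittagLeffler hα (β + 1) z).mul_left (β : ℂ))
  refine ((hasSum_mittagLeffler hα β z).unique ?_)
  refine h.congr_fun fun n ↦ ?_
  have hΓ := Complex.one_div_Gamma_eq_self_mul_one_div_Gamma_add_one ((n : ℂ) * α + β)
  have hderiv : z * deriv (fun z : ℂ ↦ z ^ n / Complex.Gamma ((n : ℂ) * α + (β + 1 : ℝ))) z =
      n * (z ^ n / Complex.Gamma ((n : ℂ) * α + (β + 1 : ℝ))) := by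
    rw [deriv_div_const, deriv_pow_field]
    cases n with
    | zero => simp
    | succ k => rw [Nat.add_sub_cancel]; ring
  rw [mul_assoc (α : ℂ), hderiv, div_eq_mul_inv _ (Complex.Gamma (n * α + β)), hΓ]
  push_cast
  rw [add_assoc]
  ring

theorem norm_rpow_add_mul_cos_le {α x : ℝ} (hα0 : 0 < α) (hα2 : α < 2) (hx : 0 ≤ x) {w : ℂ}
    (hw : 0 < w.re) :
    (‖w‖ ^ α + x) * Real.cos (Real.pi * α / 4) ≤ ‖w ^ (α : ℂ) + x‖ := by
  have hw0 : w ≠ 0 := fun h ↦ by simp [h] at hw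
  have hn : 0 < ‖w‖ := norm_pos_iff.2 hw0
  have hcos : Real.cos (Real.pi * α / 4) ≤ Real.cos (w.arg * (α / 2)) := by
    rw [← Real.cos_abs (w.arg * (α / 2)), abs_mul, abs_of_pos (half_pos hα0)]
    have harg := Complex.abs_arg_le_pi_div_two_iff.2 hw.le
    refine Real.cos_le_cos_of_nonneg_of_le_pi (by positivity) ?_ ?_
    · nlinarith [Real.pi_pos]
    · nlinarith
  have hfac : w ^ (α : ℂ) + x = w ^ ((α / 2 : ℝ) : ℂ) *
      (w ^ ((α / 2 : ℝ) : ℂ) + x * w ^ ((-(α / 2) : ℝ) : ℂ)) := by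
    rw [mul_add, mul_left_comm, ← Complex.cpow_add _ _ hw0, ← Complex.cpow_add _ _ hw0,
      ← Complex.ofReal_add, ← Complex.ofReal_add]
    simp
  have hre : (‖w‖ ^ (α / 2) + x * ‖w‖ ^ (-(α / 2))) * Real.cos (Real.pi * α / 4) ≤
      (w ^ ((α / 2 : ℝ) : ℂ) + x * w ^ ((-(α / 2) : ℝ) : ℂ)).re := by
    rw [Complex.add_re, Complex.re_ofReal_mul, Complex.cpow_ofReal_re, Complex.cpow_ofReal_re,
      mul_neg w.arg, Real.cos_neg, ← mul_assoc, ← add_mul]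
    gcongr
  rw [hfac, norm_mul, Complex.norm_cpow_real]
  calc (‖w‖ ^ α + x) * Real.cos (Real.pi * α / 4)
      = ‖w‖ ^ (α / 2) *
        ((‖w‖ ^ (α / 2) + x * ‖w‖ ^ (-(α / 2))) * Real.cos (Real.pi * α / 4)) := by
        rw [← mul_assoc, mul_add, mul_left_comm, ← Real.rpow_add hn, ← Real.rpow_add hn]
        simp
    _ ≤ _ := by
        gcongr
        exact hre.trans (Complex.re_le_norm _)

/-- An open convex neighbourhood of the closed positive real axis, with apex `-a` and slope `a`. -/
def shiftedSector (a : ℝ) : Set ℂ := {z | |z.im| < a * (a + z.re)}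

theorem isOpen_shiftedSector (a : ℝ) : IsOpen (shiftedSector a) :=
  isOpen_lt (by fun_prop) (by fun_prop)

theorem convex_shiftedSector (a : ℝ) : Convex ℝ (shiftedSector a) := by
  intro z hz w hw s t hs ht hst
  simp only [shiftedSector, mem_ofPred_eq] at *
  rw [abs_lt] at *
  simp only [Complex.add_im, Complex.add_re, Complex.real_smul, Complex.im_ofReal_mul,
    Complex.re_ofReal_mul]
  obtain rfl : s = 1 - t := by linarith
  rcases hs.eq_or_lt with h | h
  · obtain rfl : t = 1 := by linarith
    constructor <;> linarith
  · constructor <;> nlinarith [mul_lt_mul_of_pos_left hz.1 h, mul_lt_mul_of_pos_left hz.2 h,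
      mul_le_mul_of_nonneg_left hw.1.le ht, mul_le_mul_of_nonneg_left hw.2.le ht]

theorem ofReal_mem_shiftedSector {a x : ℝ} (ha : 0 < a) (hx : 0 ≤ x) :
    (x : ℂ) ∈ shiftedSector a := by
  simp only [shiftedSector, mem_ofPred_eq, Complex.ofReal_im, Complex.ofReal_re, abs_zero]
  positivity

theorem neg_lt_re_of_mem_shiftedSector {a : ℝ} {z : ℂ} (ha : 0 < a) (hz : z ∈ shiftedSector a) :
    -a < z.re := by
  have h : 0 < a * (a + z.re) := (abs_nonneg _).trans_lt hz
  linarith [pos_of_mul_pos_right h ha.le]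

theorem exists_mul_le_norm_verticalLine_cpow_add {α : ℝ} (hα0 : 0 < α) (hα2 : α < 2) :
    ∃ a : ℝ, 0 < a ∧ a < 1 ∧ ∀ z ∈ shiftedSector a, ∀ y,
      a * (1 + z.re) ≤ ‖verticalLine y ^ (α : ℂ) + z‖ := by
  set c := Real.cos (Real.pi * α / 4) with hc
  have hc0 : 0 < c := Real.cos_pos_of_mem_Ioo ⟨by nlinarith [Real.pi_pos], by nlinarith [Real.pi_pos]⟩
  have hc1 : c ≤ 1 := Real.cos_le_one _
  refine ⟨c / 2, by positivity, by linarith, fun z hz y ↦ ?_⟩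
  set w := verticalLine y
  have hx := neg_lt_re_of_mem_shiftedSector (by positivity) hz
  have hz' : |z.im| < c / 2 * (c / 2 + z.re) := hz
  have hwα : 1 ≤ ‖w‖ ^ α := Real.one_le_rpow (one_le_norm_verticalLine y) hα0.le
  have hreal : c * (1 + z.re) ≤ ‖w ^ (α : ℂ) + z.re‖ := by
    rcases le_or_gt 0 z.re with h | h
    · have hw : 0 < w.re := by rw [verticalLine_re]; exact one_pos
      refine le_trans ?_ (norm_rpow_add_mul_cos_le hα0 hα2 h hw)
      rw [mul_comm]
      gcongr
    · have h1 := norm_sub_le_norm_add (w ^ (α : ℂ)) (z.re : ℂ)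
      rw [Complex.norm_cpow_real, Complex.norm_real, Real.norm_of_nonpos h.le] at h1
      nlinarith
  have htri : ‖w ^ (α : ℂ) + z.re‖ ≤ ‖w ^ (α : ℂ) + z‖ + |z.im| := by
    have h2 : w ^ (α : ℂ) + z.re = (w ^ (α : ℂ) + z) - z.im * Complex.I := by
      linear_combination Complex.re_add_im z
    rw [h2]
    refine (norm_sub_le _ _).trans_eq ?_
    simp
  nlinarith

/-- The integral over the line `Re w = 1` representing `E_{α,β}(-z)`. -/
noncomputable def mittagLefflerLine (α β : ℝ) (z : ℂ) : ℂ :=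
  ∫ y, Complex.exp (verticalLine y) * verticalLine y ^ ((α - β : ℝ) : ℂ) /
    (verticalLine y ^ (α : ℂ) + z)

theorem norm_exp_verticalLine_mul_cpow (y c : ℝ) :
    ‖Complex.exp (verticalLine y) * verticalLine y ^ (c : ℂ)‖ =
      Real.exp 1 * ‖verticalLine y‖ ^ c := by
  rw [norm_mul, Complex.norm_exp, verticalLine_re, Complex.norm_cpow_real]

theorem mittagLeffler_neg_eq_line_of_norm_lt_one {α β : ℝ} (hα : 0 < α) (hβ : 1 < β) {z : ℂ}
    (hz : ‖z‖ < 1) : mittagLeffler α β (-z) = mittagLefflerLine α β z := by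
  set F : ℕ → ℝ → ℂ := fun n y ↦ (-z) ^ n *
    (Complex.exp (verticalLine y) * verticalLine y ^ ((-(n * α + β) : ℝ) : ℂ)) with hF
  have hn (n : ℕ) : 1 < n * α + β := by
    have : 0 ≤ n * α := by positivity
    linarith
  have hbase := (integrable_norm_verticalLine_rpow hβ).const_mul (Real.exp 1)
  have hnorm (n : ℕ) (y : ℝ) :
      ‖F n y‖ ≤ ‖z‖ ^ n * (Real.exp 1 * ‖verticalLine y‖ ^ (-β)) := by
    rw [hF, norm_mul, norm_exp_verticalLine_mul_cpow, norm_pow, norm_neg]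
    have h1 := one_le_norm_verticalLine y
    have : 0 ≤ n * α := by positivity
    gcongr
    linarith
  have hmeas (n : ℕ) : AEStronglyMeasurable (F n) :=
    (continuous_const.mul ((Complex.continuous_exp.comp continuous_verticalLine).mul
      (continuous_verticalLine_cpow _))).aestronglyMeasurable
  have hint (n : ℕ) : Integrable (F n) :=
    (hbase.const_mul (‖z‖ ^ n)).mono' (hmeas n) (Eventually.of_forall (hnorm n))
  have hsum : Summable fun n ↦ ∫ y, ‖F n y‖ := by
    refine Summable.of_nonneg_of_le (fun n ↦ by positivity) (fun n ↦ ?_)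
      ((summable_geometric_of_lt_one (norm_nonneg z) hz).mul_right
        (∫ y, Real.exp 1 * ‖verticalLine y‖ ^ (-β)))
    rw [← integral_const_mul]
    exact integral_mono (hint n).norm (hbase.const_mul _) (hnorm n)
  have hS := hasSum_integral_of_summable_integral_norm hint hsum
  refine (hasSum_mittagLeffler hα β (-z)).unique ?_
  convert! hS using 1
  · ext n
    rw [hF, integral_const_mul, ← one_div_Gamma_eq_integral_verticalLine (hn n)]
    push_cast
    ring
  · rw [mittagLefflerLine]
    congr 1 with y
    set w := verticalLine y
    have hw : w ≠ 0 := verticalLine_ne_zero y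
    have hwα : w ^ (α : ℂ) ≠ 0 := by simp [Complex.cpow_eq_zero_iff, hw]
    have hwn : 1 ≤ ‖w ^ (α : ℂ)‖ := by
      rw [Complex.norm_cpow_real]
      exact Real.one_le_rpow (one_le_norm_verticalLine y) hα.le
    have hq : ‖-z * (w ^ (α : ℂ))⁻¹‖ < 1 := by
      rw [norm_mul, norm_neg, norm_inv]
      exact (mul_le_of_le_one_right (norm_nonneg z) (inv_le_one_of_one_le₀ hwn)).trans_lt hz
    have hsumne : w ^ (α : ℂ) + z ≠ 0 := fun h ↦ by
      rw [eq_neg_of_add_eq_zero_left h, norm_neg] at hwn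
      linarith
    have hterm (n : ℕ) : F n y =
        (Complex.exp w * w ^ ((-β : ℝ) : ℂ)) * (-z * (w ^ (α : ℂ))⁻¹) ^ n := by
      have : w ^ ((-(n * α + β) : ℝ) : ℂ) = ((w ^ (α : ℂ))⁻¹) ^ n * w ^ ((-β : ℝ) : ℂ) := by
        rw [← Complex.cpow_neg, ← Complex.cpow_nat_mul, ← Complex.cpow_add _ _ hw]
        push_cast
        ring_nf
      simp only [hF]
      rw [this, mul_pow]
      ring
    simp_rw [hterm]
    rw [tsum_mul_left, tsum_geometric_of_norm_lt_one hq,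
      show ((α - β : ℝ) : ℂ) = (α : ℂ) + ((-β : ℝ) : ℂ) by push_cast; ring,
      Complex.cpow_add _ _ hw]
    have : 1 - -z * (w ^ (α : ℂ))⁻¹ = (w ^ (α : ℂ) + z) * (w ^ (α : ℂ))⁻¹ := by
      field_simp; ring
    rw [this]
    field_simp

theorem differentiableOn_mittagLefflerLine {α β a : ℝ} (hβ : 1 + α < β) (ha0 : 0 < a) (ha1 : a < 1)
    (ha : ∀ z ∈ shiftedSector a, ∀ y, a * (1 + z.re) ≤ ‖verticalLine y ^ (α : ℂ) + z‖) :
    DifferentiableOn ℂ (mittagLefflerLine α β) (shiftedSector a) := by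
  intro z hz
  set b := a * (1 - a) with hb
  have hb0 : 0 < b := mul_pos ha0 (by linarith)
  have hlow (z : ℂ) (hz : z ∈ shiftedSector a) (y : ℝ) : b ≤ ‖verticalLine y ^ (α : ℂ) + z‖ := by
    refine le_trans ?_ (ha z hz y)
    have := neg_lt_re_of_mem_shiftedSector ha0 hz
    rw [hb]
    gcongr
    linarith
  have hne (z : ℂ) (hz : z ∈ shiftedSector a) (y : ℝ) : verticalLine y ^ (α : ℂ) + z ≠ 0 :=
    norm_pos_iff.1 (hb0.trans_le (hlow z hz y))
  have hnum : Continuous fun y ↦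
      Complex.exp (verticalLine y) * verticalLine y ^ ((α - β : ℝ) : ℂ) :=
    (Complex.continuous_exp.comp continuous_verticalLine).mul (continuous_verticalLine_cpow _)
  have hden (z : ℂ) : Continuous fun y ↦ verticalLine y ^ (α : ℂ) + z :=
    (continuous_verticalLine_cpow _).add continuous_const
  have hbase : Integrable fun y ↦ Real.exp 1 * ‖verticalLine y‖ ^ (α - β) := by
    have := (integrable_norm_verticalLine_rpow (s := β - α) (by linarith)).const_mul (Real.exp 1)
    simpa using this
  have hnhds := (isOpen_shiftedSector a).mem_nhds hz
  refine ((hasDerivAt_integral_of_dominated_loc_of_deriv_le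
    (F' := fun (z : ℂ) (y : ℝ) ↦
      -(Complex.exp (verticalLine y) * verticalLine y ^ ((α - β : ℝ) : ℂ)) /
        (verticalLine y ^ (α : ℂ) + z) ^ 2)
    (bound := fun y ↦ Real.exp 1 * ‖verticalLine y‖ ^ (α - β) / b ^ 2)
    hnhds ?_ ?_ ?_ ?_ (hbase.div_const _) ?_).2.differentiableAt).differentiableWithinAt
  · filter_upwards [hnhds] with z hz
    exact (hnum.div (hden z) (hne z hz)).aestronglyMeasurable
  · refine (hbase.div_const b).mono' (hnum.div (hden z) (hne z hz)).aestronglyMeasurable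
      (Eventually.of_forall fun y ↦ ?_)
    rw [norm_div, norm_exp_verticalLine_mul_cpow]
    have := hlow z hz y
    gcongr
  · exact (hnum.neg.div ((hden z).pow 2)
      fun y ↦ pow_ne_zero 2 (hne z hz y)).aestronglyMeasurable
  · refine Eventually.of_forall fun y z hz ↦ ?_
    rw [norm_div, norm_neg, norm_exp_verticalLine_mul_cpow, norm_pow]
    have := hlow z hz y
    gcongr
  · refine Eventually.of_forall fun y z hz ↦ ?_
    have h := (hasDerivAt_const z (Complex.exp (verticalLine y) *
      verticalLine y ^ ((α - β : ℝ) : ℂ))).fun_div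
        ((hasDerivAt_id z).const_add (verticalLine y ^ (α : ℂ))) (hne z hz y)
    simpa using h

theorem norm_mittagLefflerLine_le {α β a : ℝ} (hβ : 1 + α < β) (ha0 : 0 < a) (ha1 : a < 1)
    (ha : ∀ z ∈ shiftedSector a, ∀ y, a * (1 + z.re) ≤ ‖verticalLine y ^ (α : ℂ) + z‖)
    {z : ℂ} (hz : z ∈ shiftedSector a) :
    ‖mittagLefflerLine α β z‖ ≤
      (∫ y, Real.exp 1 * ‖verticalLine y‖ ^ (α - β)) / a * (1 + z.re)⁻¹ := by
  have hbase : Integrable fun y ↦ Real.exp 1 * ‖verticalLine y‖ ^ (α - β) := by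
    have := (integrable_norm_verticalLine_rpow (s := β - α) (by linarith)).const_mul (Real.exp 1)
    simpa using this
  have hx : 0 < 1 + z.re := by linarith [neg_lt_re_of_mem_shiftedSector ha0 hz]
  rw [div_mul_eq_mul_div, mul_div_assoc, ← integral_mul_const]
  refine norm_integral_le_of_norm_le (hbase.mul_const _) (Eventually.of_forall fun y ↦ ?_)
  rw [norm_div, norm_exp_verticalLine_mul_cpow, div_eq_mul_inv _ ‖_‖,
    show (1 + z.re)⁻¹ / a = (a * (1 + z.re))⁻¹ by field_simp]
  have := ha z hz y
  gcongr

theorem mittagLeffler_neg_eqOn_line {α β a : ℝ} (hα : 0 < α) (hβ : 1 + α < β) (ha0 : 0 < a)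
    (ha1 : a < 1)
    (ha : ∀ z ∈ shiftedSector a, ∀ y, a * (1 + z.re) ≤ ‖verticalLine y ^ (α : ℂ) + z‖) :
    EqOn (fun z ↦ mittagLeffler α β (-z)) (mittagLefflerLine α β) (shiftedSector a) := by
  have h0 : (0 : ℂ) ∈ shiftedSector a := by
    simpa using ofReal_mem_shiftedSector ha0 le_rfl
  refine AnalyticOnNhd.eqOn_of_preconnected_of_eventuallyEq
    (((differentiable_mittagLeffler hα β).comp differentiable_neg).differentiableOn.analyticOnNhd
      (isOpen_shiftedSector a))
    ((differentiableOn_mittagLefflerLine hβ ha0 ha1 ha).analyticOnNhd (isOpen_shiftedSector a))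
    (convex_shiftedSector a).isPreconnected h0 ?_
  filter_upwards [Metric.ball_mem_nhds (0 : ℂ) one_pos] with z hz
  exact mittagLeffler_neg_eq_line_of_norm_lt_one hα (by linarith) (by simpa using hz)

/-- Decay of order one of `z ↦ E_{α,β}(-z)` in some shifted sector around the positive real axis. -/
def MittagLefflerSectorDecay (α β : ℝ) : Prop :=
  ∃ a : ℝ, 0 < a ∧ a < 1 ∧ ∃ C : ℝ, 0 < C ∧
    ∀ z ∈ shiftedSector a, ‖mittagLeffler α β (-z)‖ ≤ C * (1 + z.re)⁻¹

theorem mittagLefflerSectorDecay_of_lt {α β : ℝ} (hα0 : 0 < α) (hα2 : α < 2) (hβ : 1 + α < β) :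
    MittagLefflerSectorDecay α β := by
  obtain ⟨a, ha0, ha1, ha⟩ := exists_mul_le_norm_verticalLine_cpow_add hα0 hα2
  refine ⟨a, ha0, ha1, (∫ y, Real.exp 1 * ‖verticalLine y‖ ^ (α - β)) / a + 1, by positivity,
    fun z hz ↦ ?_⟩
  have hx : 0 < 1 + z.re := by linarith [neg_lt_re_of_mem_shiftedSector ha0 hz]
  have h := norm_mittagLefflerLine_le hβ ha0 ha1 ha hz
  rw [← mittagLeffler_neg_eqOn_line hα0 hβ ha0 ha1 ha hz] at h
  refine h.trans ?_
  gcongr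
  linarith

theorem closedBall_subset_shiftedSector {a : ℝ} (ha0 : 0 < a) (ha1 : a < 1) {z : ℂ}
    (hz : z ∈ shiftedSector (a / 2)) :
    Metric.closedBall z (a ^ 2 / 8 * (1 + z.re)) ⊆ shiftedSector a := by
  intro w hw
  rw [mem_closedBall_iff_norm] at hw
  have hx := neg_lt_re_of_mem_shiftedSector (by positivity) hz
  have hz' : |z.im| < a / 2 * (a / 2 + z.re) := hz
  have hre := (Complex.abs_re_le_norm (w - z)).trans hw
  have him := (Complex.abs_im_le_norm (w - z)).trans hw
  rw [Complex.sub_re, abs_le] at hre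
  rw [Complex.sub_im, abs_le] at him
  rw [abs_lt] at hz'
  set r := a ^ 2 / 8 * (1 + z.re) with hr
  have hr0 : 0 < r := by
    have : 0 < 1 + z.re := by linarith
    positivity
  have hkey : a / 2 * (a / 2 + z.re) + r < a * (a + z.re - r) := by
    have h1 : r * (1 + a) ≤ a ^ 2 / 4 * (1 + z.re) := by nlinarith
    have h2 : a ^ 2 / 4 * (1 + z.re) < a / 2 * (3 * a / 2 + z.re) := by nlinarith
    nlinarith
  have hle : a * (a + z.re - r) ≤ a * (a + w.re) := by
    gcongr
    linarith
  change |w.im| < a * (a + w.re)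
  rw [abs_lt]
  constructor <;> linarith

theorem MittagLefflerSectorDecay.of_add_one {α β : ℝ} (hα : 0 < α)
    (h : MittagLefflerSectorDecay α (β + 1)) : MittagLefflerSectorDecay α β := by
  obtain ⟨a, ha0, ha1, C, hC, hbound⟩ := h
  refine ⟨a / 2, by positivity, by linarith, 32 * α * C / a ^ 2 + |β| * C, by positivity,
    fun z hz ↦ ?_⟩
  have hx := neg_lt_re_of_mem_shiftedSector (by positivity) hz
  have hz' : |z.im| < a / 2 * (a / 2 + z.re) := hz
  set X := 1 + z.re with hX
  have hX0 : 0 < X := by linarith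
  have hsub := closedBall_subset_shiftedSector ha0 ha1 hz
  set r := a ^ 2 / 8 * (1 + z.re) with hr
  have hr0 : 0 < r := by positivity
  have hrX : r ≤ X / 2 := by
    have ha2 : a ^ 2 ≤ 1 := by nlinarith
    rw [hr, ← hX]
    nlinarith
  have hderiv : ‖deriv (mittagLeffler α (β + 1)) (-z)‖ ≤ C * (X / 2)⁻¹ / r := by
    refine Complex.norm_deriv_le_of_forall_mem_sphere_norm_le hr0
      (differentiable_mittagLeffler hα _).diffContOnCl fun w hw ↦ ?_
    have hw' : ‖-w - z‖ = r := by
      rw [mem_sphere_iff_norm] at hw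
      rw [← hw, ← norm_neg]
      ring_nf
    have hmem : -w ∈ shiftedSector a := hsub (by rw [mem_closedBall_iff_norm]; exact hw'.le)
    have hb := hbound _ hmem
    rw [neg_neg] at hb
    refine hb.trans ?_
    have hre := (Complex.abs_re_le_norm (-w - z)).trans hw'.le
    rw [Complex.sub_re, abs_le] at hre
    gcongr
    linarith
  have hzn : ‖z‖ ≤ 2 * X := by
    refine (Complex.norm_le_abs_re_add_abs_im z).trans ?_
    have h1 : |z.re| ≤ X := abs_le.2 ⟨by linarith, by linarith⟩
    have h2 : |z.im| ≤ X := by nlinarith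
    linarith
  have hself : z ∈ shiftedSector a := hsub (Metric.mem_closedBall_self hr0.le)
  have hE := hbound z hself
  rw [mittagLeffler_eq_deriv_add hα]
  calc _ ≤ α * ‖z‖ * ‖deriv (mittagLeffler α (β + 1)) (-z)‖ +
        |β| * ‖mittagLeffler α (β + 1) (-z)‖ := by
        refine (norm_add_le _ _).trans_eq ?_
        simp [abs_of_pos hα]
    _ ≤ α * (2 * X) * (C * (X / 2)⁻¹ / r) + |β| * (C * X⁻¹) := by gcongr
    _ = _ := by
        rw [hr, ← hX]
        field_simp
        ring

theorem mittagLefflerSectorDecay {α : ℝ} (hα0 : 0 < α) (hα2 : α < 2) (β : ℝ) :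
    MittagLefflerSectorDecay α β := by
  obtain ⟨n, hn⟩ := exists_nat_gt (1 + α - β)
  have h : MittagLefflerSectorDecay α (β + n) :=
    mittagLefflerSectorDecay_of_lt hα0 hα2 (by linarith)
  clear hn
  induction n with
  | zero => simpa using h
  | succ n ih =>
    refine ih (MittagLefflerSectorDecay.of_add_one hα0 ?_)
    simpa [add_assoc] using h

/-- For `α ∈ (0,2)` and `β ∈ ℝ`, there is `C > 0` such that
`|E_{α,β}(−t)| ≤ C (1+t)⁻¹` for all real `t ≥ 0`. -/
theorem mittagLeffler_decay_neg_real (α β : ℝ) (hα : α ∈ Set.Ioo (0:ℝ) 2) :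
    ∃ C > 0, ∀ t : ℝ, 0 ≤ t →
      ‖mittagLeffler α β (-(t : ℂ))‖ ≤ C * (1 + t)⁻¹ := by
  obtain ⟨a, ha, -, C, hC, h⟩ := mittagLefflerSectorDecay hα.1 hα.2 β
  exact ⟨C, hC, fun t ht ↦ by simpa using h t (ofReal_mem_shiftedSector ha ht)⟩
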